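/- For every finite string W over the alphabet {A, X, B}, the open values in the tight puzzle satisfy |W| = |W̄|, where W̄ denotes the reversed string. (Equivalently: for every open sentence S, a bi-infinite string in {A, X, B} with finitely many non-X letters considered up to shift, |S| = |S̄|.) -/

import Mathlib

/-!
The "tight puzzle" of Schwartz–Tabachnikov.  Strings over the alphabet `{A, X, B}`;
word list (coefficient, weight): `X (1,0)`, `XA (1,1)`, `XAA (1,1)`, `AXA (2,1)`,
`AAA (-1,1)`, `BA (-1,1)`, `ABA (-1,1)`, `XXA (-1,1)`; in a parsing the word `X` may
never be immediately followed by the word `XA` or the word `BA`.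
-/

open scoped Classical

/-- The three-letter alphabet. -/
inductive PLetter | A | X | B
deriving DecidableEq

/-- Strings over the alphabet. -/
abbrev PWord := List PLetter

/-- The tight puzzle word list. -/
def tightWords : List PWord :=
  [[PLetter.X], [PLetter.X, PLetter.A], [PLetter.X, PLetter.A, PLetter.A],
   [PLetter.A, PLetter.X, PLetter.A], [PLetter.A, PLetter.A, PLetter.A],
   [PLetter.B, PLetter.A], [PLetter.A, PLetter.B, PLetter.A],
   [PLetter.X, PLetter.X, PLetter.A]]

/-- Coefficients of the words of the tight puzzle (`AXA ↦ 2`; `AAA, BA, ABA, XXA ↦ -1`;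
`X, XA, XAA ↦ 1`). -/
def tightCoeff (w : PWord) : ℤ :=
  if w = [PLetter.A, PLetter.X, PLetter.A] then 2
  else if w = [PLetter.A, PLetter.A, PLetter.A] ∨ w = [PLetter.B, PLetter.A] ∨
      w = [PLetter.A, PLetter.B, PLetter.A] ∨ w = [PLetter.X, PLetter.X, PLetter.A] then -1
  else 1

/-- Weights of the words: the word `X` has weight `0`, all other words weight `1`. -/
def wordWt (w : PWord) : ℕ := if w = [PLetter.X] then 0 else 1

/-- The forbidden adjacency: the word `X` immediately followed by `XA` or `BA`. -/
def Bad (u v : PWord) : Prop :=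
  u = [PLetter.X] ∧ (v = [PLetter.X, PLetter.A] ∨ v = [PLetter.B, PLetter.A])

/-- The contribution `coefficient · t^weight ∈ ℤ[t]` of a parsing `L`. -/
noncomputable def parseVal (c : PWord → ℤ) (L : List PWord) : Polynomial ℤ :=
  Polynomial.C ((L.map c).prod) * Polynomial.X ^ ((L.map wordWt).sum)

/-- `L` is a parsing in the tight puzzle: all its words are on the word list and the
forbidden adjacency never occurs. -/
def TightChain (L : List PWord) : Prop :=
  (∀ w ∈ L, w ∈ tightWords) ∧ List.Chain' (fun u v => ¬ Bad u v) L

/-- The *core* of a string: what remains after deleting all leading and trailing `X`s. -/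
def core (s : PWord) : PWord :=
  ((s.dropWhile (· == PLetter.X)).reverse.dropWhile (· == PLetter.X)).reverse

/-- `L` is a parsing of the bi-infinite string `⋯XX·W·XX⋯` (with the infinitely many
padding `X`s parsed as copies of the word `X` and trimmed away): the words of `L`
concatenate to `W` up to padding by `X`s on either side, `L` neither starts nor ends
with the word `X`, and (because of the padding `X`-words on the left) the first word
of `L` is not `XA` or `BA`. -/
def IsOpenParsing (W : PWord) (L : List PWord) : Prop :=
  TightChain L ∧ core L.flatten = core W ∧
  ∀ h : L ≠ [],
    L.head h ≠ [PLetter.X] ∧ L.head h ≠ [PLetter.X, PLetter.A] ∧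
    L.head h ≠ [PLetter.B, PLetter.A] ∧ L.getLast h ≠ [PLetter.X]

/-- `(r, L)` is a parsing of the cyclic string `(W)`: reading the necklace of the
letters of `W` starting at position `r`, the words of `L` concatenate to it, the
forbidden adjacency does not occur (cyclically), and `r < (last word).length`
(so that every parsing of the necklace is counted exactly once). -/
def IsCyclicParsing (W : PWord) (r : ℕ) (L : List PWord) : Prop :=
  TightChain L ∧
  ∃ h : L ≠ [], L.flatten = W.rotate r ∧ r < (L.getLast h).length ∧
    ¬ Bad (L.getLast h) (L.head h)

/-- `L` is a parsing of the locked string `[W]`: the words of `L` concatenate exactly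
to `W`, no padding allowed. -/
def IsLockedParsing (W : PWord) (L : List PWord) : Prop :=
  TightChain L ∧ L.flatten = W

/-- The nine words of both puzzles, as a function (used to enumerate parsings). -/
def wordOf : Fin 9 → PWord :=
  ![[PLetter.X], [PLetter.X, PLetter.A], [PLetter.X, PLetter.A, PLetter.A],
    [PLetter.X, PLetter.B, PLetter.A], [PLetter.A, PLetter.X, PLetter.A],
    [PLetter.A, PLetter.A, PLetter.A], [PLetter.B, PLetter.A],
    [PLetter.A, PLetter.B, PLetter.A], [PLetter.X, PLetter.X, PLetter.A]]

/-- The open value `|W| ∈ ℤ[t]`: the sum of `coefficient · t^weight` over all parsings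
of the bi-infinite string `⋯XX·W·XX⋯` (any such parsing consists of at most
`W.length + 2` words). -/
noncomputable def openVal (W : PWord) : Polynomial ℤ :=
  ∑ k ∈ Finset.range (W.length + 3), ∑ f : Fin k → Fin 9,
    if IsOpenParsing W ((List.ofFn f).map wordOf) then
      parseVal tightCoeff ((List.ofFn f).map wordOf)
    else 0

/-- The cyclic value `|(W)| ∈ ℤ[t]`: the sum of `coefficient · t^weight` over all
parsings of the cyclic string `(W)`. -/
noncomputable def cycVal (W : PWord) : Polynomial ℤ :=
  ∑ r ∈ Finset.range W.length, ∑ k ∈ Finset.range (W.length + 1), ∑ f : Fin k → Fin 9,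
    if IsCyclicParsing W r ((List.ofFn f).map wordOf) then
      parseVal tightCoeff ((List.ofFn f).map wordOf)
    else 0

/-- The locked value `|[W]| ∈ ℤ[t]`: the sum of `coefficient · t^weight` over all
parsings whose concatenation is exactly `W`. -/
noncomputable def lockVal (W : PWord) : Polynomial ℤ :=
  ∑ k ∈ Finset.range (W.length + 1), ∑ f : Fin k → Fin 9,
    if IsLockedParsing W ((List.ofFn f).map wordOf) then
      parseVal tightCoeff ((List.ofFn f).map wordOf)
    else 0

/-! ### Sums over lists of bounded length -/

/-- The sum of `F` over all lists over `Fin 9` of length less than `N`. -/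
noncomputable def sumLists (N : ℕ) (F : List (Fin 9) → Polynomial ℤ) : Polynomial ℤ :=
  ∑ k ∈ Finset.range N, ∑ f : Fin k → Fin 9, F (List.ofFn f)

theorem sumLists_succ (N : ℕ) (F : List (Fin 9) → Polynomial ℤ) :
    sumLists (N + 1) F = F [] + ∑ i, sumLists N (fun L => F (i :: L)) := by
  unfold sumLists
  rw [Finset.sum_range_succ', Finset.sum_comm, add_comm]
  congr 1
  · simp
  · refine Finset.sum_congr rfl fun k _ => ?_
    rw [← (Fin.consEquiv fun _ => Fin 9).sum_comp, Fintype.sum_prod_type]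
    simp [Fin.consEquiv, List.ofFn_succ]

theorem sumLists_const_mul (N : ℕ) (c : Polynomial ℤ) (F : List (Fin 9) → Polynomial ℤ) :
    sumLists N (fun L => c * F L) = c * sumLists N F := by
  simp [sumLists, Finset.mul_sum]

theorem sumLists_zero_fun (N : ℕ) : sumLists N (fun _ => 0) = 0 := by
  simp [sumLists]

theorem parseVal_cons (c : PWord → ℤ) (w : PWord) (L : List PWord) :
    parseVal c (w :: L) =
      Polynomial.C (c w) * Polynomial.X ^ wordWt w * parseVal c L := by
  simp only [parseVal, List.map_cons, List.prod_cons, List.sum_cons, pow_add, map_mul]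
  ring

/-! ### Parsings of a string following a given word -/

/-- `L` is a parsing of exactly `s` that may be placed directly after the word `p`. -/
def IsParsingAfter (p s : PWord) (L : List PWord) : Prop :=
  (∀ w ∈ L, w ∈ tightWords) ∧ List.IsChain (fun u v => ¬ Bad u v) (p :: L) ∧ L.flatten = s

/-- The total value of the parsings of `s` after `p` with fewer than `N` words. -/
noncomputable def valAfter (N : ℕ) (p s : PWord) : Polynomial ℤ :=
  sumLists N fun L =>
    if IsParsingAfter p s (L.map wordOf) then parseVal tightCoeff (L.map wordOf) else 0

theorem isParsingAfter_cons (p s w : PWord) (L : List PWord) :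
    IsParsingAfter p s (w :: L) ↔
      (w ∈ tightWords ∧ ¬ Bad p w) ∧ ∃ s', s = w ++ s' ∧ IsParsingAfter w s' L := by
  simp only [IsParsingAfter, List.forall_mem_cons, List.isChain_cons_cons, List.flatten_cons]
  constructor
  · rintro ⟨⟨hw, hL⟩, ⟨hb, hc⟩, rfl⟩
    exact ⟨⟨hw, hb⟩, _, rfl, hL, hc, rfl⟩
  · rintro ⟨⟨hw, hb⟩, _, rfl, hL, hc, rfl⟩
    exact ⟨⟨hw, hL⟩, ⟨hb, hc⟩, rfl⟩

/-- The value contributed by parsings whose first word is `w`, when the string is `s`. -/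
noncomputable def firstWordVal (N : ℕ) (w s : PWord) : Polynomial ℤ :=
  if w <+: s then
    Polynomial.C (tightCoeff w) * Polynomial.X ^ wordWt w * valAfter N w (s.drop w.length)
  else 0

theorem sumLists_firstWord (N : ℕ) (i : Fin 9) (s : PWord) (P : List PWord → Prop)
    (q : Prop) [Decidable q]
    (hP : ∀ L, P (wordOf i :: L) ↔
      q ∧ ∃ s', s = wordOf i ++ s' ∧ IsParsingAfter (wordOf i) s' L) :
    sumLists N (fun L => if P ((i :: L).map wordOf) then
      parseVal tightCoeff ((i :: L).map wordOf) else 0) =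
      if q then firstWordVal N (wordOf i) s else 0 := by
  simp only [List.map_cons, hP, parseVal_cons]
  by_cases hq : q
  · by_cases hs : wordOf i <+: s
    · obtain ⟨s', rfl⟩ := hs
      simp only [hq, List.append_cancel_left_eq, true_and, exists_eq_left', firstWordVal,
        List.prefix_append, if_true, List.drop_left, valAfter, ← sumLists_const_mul, mul_ite,
        mul_zero]
    · have : ∀ L, ¬ ∃ s', s = wordOf i ++ s' ∧ IsParsingAfter (wordOf i) s' L := by
        rintro L ⟨s', rfl, -⟩
        exact hs (List.prefix_append _ _)
      simp [this, firstWordVal, hs, sumLists_zero_fun]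
  · simp [hq, sumLists_zero_fun]

theorem valAfter_succ (N : ℕ) (p s : PWord) :
    valAfter (N + 1) p s = (if s = [] then 1 else 0) +
      ∑ i, if wordOf i ∈ tightWords ∧ ¬ Bad p (wordOf i) then
        firstWordVal N (wordOf i) s else 0 := by
  rw [valAfter, sumLists_succ]
  congr 1
  · simp [IsParsingAfter, parseVal, eq_comm]
  · exact Finset.sum_congr rfl fun i _ =>
      sumLists_firstWord N i s _ _ fun L => isParsingAfter_cons p s (wordOf i) L

/-! ### The transfer recursion -/

/-- Three quantities attached to a string `s`, determined recursively: the value of `s` after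
a word other than `X`; the value of what follows a leading `A` of `s`; and the value of what
follows a leading `AA`, `XA` or `BA`, taken with coefficient `1`, `-2` or `1`. -/
noncomputable def transfer : PWord → Polynomial ℤ × Polynomial ℤ × Polynomial ℤ
  | [] => (1, 0, 0)
  | PLetter.A :: s =>
    (-Polynomial.X * (transfer s).2.2, (transfer s).1, (transfer s).2.1)
  | PLetter.B :: s => (-Polynomial.X * (transfer s).2.1, 0, (transfer s).2.1)
  | PLetter.X :: s =>
    ((transfer s).1 + Polynomial.X * (transfer s).2.1 + Polynomial.X * (transfer s).2.2,
      0, -2 * (transfer s).2.1)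

/-- The change in the value of a string caused by a preceding word `X`. -/
noncomputable def afterXCorrection : PWord → Polynomial ℤ
  | PLetter.X :: s => -Polynomial.X * (transfer s).2.1
  | PLetter.B :: s => Polynomial.X * (transfer s).2.1
  | _ => 0

/-- The expected value of the parsings of `s` after the word `p`. -/
noncomputable def transferVal (p s : PWord) : Polynomial ℤ :=
  (transfer s).1 + if p = [PLetter.X] then afterXCorrection s else 0

theorem firstWordVal_eq (N : ℕ) (hN : ∀ p s, s.length < N → valAfter N p s = transferVal p s)
    (w s : PWord) (hw : w ≠ []) (hs : s.length ≤ N) :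
    firstWordVal N w s = if w <+: s then
      Polynomial.C (tightCoeff w) * Polynomial.X ^ wordWt w * transferVal w (s.drop w.length)
      else 0 := by
  unfold firstWordVal
  split_ifs with h
  · rw [hN]
    have := h.length_le
    have := List.length_pos_iff.mpr hw
    simp only [List.length_drop]
    omega
  · rfl

theorem valAfter_eq (N : ℕ) (p s : PWord) (h : s.length < N) :
    valAfter N p s = transferVal p s := by
  induction N generalizing p s with
  | zero => omega
  | succ N ih =>
    rw [valAfter_succ]
    have key := fun w hw => firstWordVal_eq N ih w s hw (by omega)
    by_cases hp : p = [PLetter.X]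
    all_goals
      simp [Fin.sum_univ_succ, wordOf, tightWords, Bad, hp, key, tightCoeff, wordWt,
        transferVal]
      clear key h
      rcases s with _ | ⟨_ | _ | _, _ | ⟨_ | _ | _, _ | ⟨_ | _ | _, s⟩⟩⟩ <;>
      simp [transfer, afterXCorrection] <;> ring

/-! ### Open values -/

/-- A string that neither starts nor ends with `X`. -/
def IsTrimmed (c : PWord) : Prop :=
  c.head? ≠ some PLetter.X ∧ c.getLast? ≠ some PLetter.X

theorem dropWhile_replicate_append (m : ℕ) (c : PWord) (hc : c.head? ≠ some PLetter.X) :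
    (List.replicate m PLetter.X ++ c).dropWhile (· == PLetter.X) = c := by
  induction m with
  | zero => cases c <;> simp_all
  | succ m ih => simpa [List.replicate_succ, List.dropWhile_cons] using ih

theorem exists_eq_replicate_append (s : PWord) :
    ∃ m c, s = List.replicate m PLetter.X ++ c ∧ c.head? ≠ some PLetter.X := by
  induction s with
  | nil => exact ⟨0, [], by simp⟩
  | cons a s ih =>
    by_cases ha : a = PLetter.X
    · obtain ⟨m, c, rfl, hc⟩ := ih
      exact ⟨m + 1, c, by simp [ha, List.replicate_succ], hc⟩
    · exact ⟨0, a :: s, by simp, by simpa using ha⟩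

theorem core_pad (m n : ℕ) (c : PWord) (hne : c ≠ []) (hc : IsTrimmed c) :
    core (List.replicate m PLetter.X ++ c ++ List.replicate n PLetter.X) = c := by
  have h1 : (c ++ List.replicate n PLetter.X).head? ≠ some PLetter.X := by
    cases c
    · exact absurd rfl hne
    · simpa using hc.1
  rw [core, List.append_assoc, dropWhile_replicate_append _ _ h1, List.reverse_append,
    List.reverse_replicate, dropWhile_replicate_append _ _ (by simpa using hc.2),
    List.reverse_reverse]

theorem exists_eq_pad (W : PWord) :
    (∃ m, W = List.replicate m PLetter.X) ∨ ∃ m n c, c ≠ [] ∧ IsTrimmed c ∧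
      W = List.replicate m PLetter.X ++ c ++ List.replicate n PLetter.X := by
  obtain ⟨m, d, rfl, hd⟩ := exists_eq_replicate_append W
  obtain ⟨n, c, hc, hc'⟩ := exists_eq_replicate_append d.reverse
  obtain rfl : d = c.reverse ++ List.replicate n PLetter.X := by
    rw [← List.reverse_reverse d, hc]; simp
  rcases eq_or_ne c [] with rfl | hne
  · exact Or.inl ⟨m + n, by simp⟩
  · refine Or.inr ⟨m, n, c.reverse, by simpa, ⟨?_, by simpa using hc'⟩, by simp⟩
    intro h
    rw [List.head?_append, h] at hd
    exact hd rfl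

theorem getLast_tightWords {w : PWord} (hw : w ∈ tightWords) (hX : w ≠ [PLetter.X]) :
    w.getLast? = some PLetter.A := by
  simp only [tightWords, List.mem_cons, List.not_mem_nil, or_false] at hw
  rcases hw with rfl | rfl | rfl | rfl | rfl | rfl | rfl | rfl <;> simp_all

theorem core_eq_dropWhile (s : PWord) (h : s.getLast? = some PLetter.A) :
    core s = s.dropWhile (· == PLetter.X) := by
  obtain ⟨m, c, rfl, hc⟩ := exists_eq_replicate_append s
  rw [dropWhile_replicate_append _ _ hc]
  have hne : c ≠ [] := by
    rintro rfl
    rw [List.append_nil, List.getLast?_replicate] at h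
    split_ifs at h
    simp at h
  rw [List.getLast?_append_of_ne_nil _ hne] at h
  simpa using core_pad m 0 c hne ⟨hc, by simp [h]⟩

theorem isOpenParsing_iff {W c : PWord} (hW : core W = c) (hc : c ≠ []) (hct : IsTrimmed c)
    (w : PWord) (L : List PWord) :
    IsOpenParsing W (w :: L) ↔ TightChain (w :: L) ∧
      (w ++ L.flatten).dropWhile (· == PLetter.X) = c ∧
      w ≠ [PLetter.X] ∧ w ≠ [PLetter.X, PLetter.A] ∧ w ≠ [PLetter.B, PLetter.A] := by
  have hsplit : w :: L = (w :: L).dropLast ++ [(w :: L).getLast (by simp)] :=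
    (List.dropLast_append_getLast _).symm
  have hflat : w ++ L.flatten =
      (w :: L).dropLast.flatten ++ (w :: L).getLast (by simp) := by
    rw [← List.flatten_cons]
    conv_lhs => rw [hsplit]
    simp
  simp only [IsOpenParsing, hW, List.flatten_cons, List.head_cons]
  constructor
  · rintro ⟨ht, hcore, hh⟩
    obtain ⟨h1, h2, h3, h4⟩ := hh (by simp)
    refine ⟨ht, ?_, h1, h2, h3⟩
    rw [← hcore, core_eq_dropWhile]
    have hA := getLast_tightWords (ht.1 _ (List.getLast_mem (by simp))) h4
    rw [hflat, List.getLast?_append, hA]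
    rfl
  · rintro ⟨ht, hdrop, h1, h2, h3⟩
    obtain ⟨m, d, hd, hd'⟩ := exists_eq_replicate_append (w ++ L.flatten)
    rw [hd, dropWhile_replicate_append _ _ hd'] at hdrop
    subst hdrop
    refine ⟨ht, ?_, fun _ => ⟨h1, h2, h3, fun h4 => hct.2 ?_⟩⟩
    · rw [hd]
      simpa using core_pad m 0 d hc hct
    · rw [← List.getLast?_append_of_ne_nil (List.replicate m PLetter.X) hc, ← hd, hflat, h4]
      simp

theorem openVal_eq {W c : PWord} (hW : core W = c) (hc : c ≠ []) (hct : IsTrimmed c)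
    (hlen : c.length ≤ W.length) :
    openVal W = (transfer c).1 - Polynomial.X * (transfer c).2.1 +
      Polynomial.X * (transfer c).2.2 := by
  have hopen : openVal W = sumLists (W.length + 2 + 1) fun L =>
      if IsOpenParsing W (L.map wordOf) then parseVal tightCoeff (L.map wordOf) else 0 := rfl
  let pad : Fin 9 → PWord := ![[], [], [PLetter.X], [], [], [], [], [], [PLetter.X, PLetter.X]]
  let q : Fin 9 → Prop := ![False, False, True, False, True, True, False, True, True]
  have hfirst : ∀ i L, IsOpenParsing W (wordOf i :: L) ↔
      q i ∧ ∃ s', pad i ++ c = wordOf i ++ s' ∧ IsParsingAfter (wordOf i) s' L := by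
    intro i L
    rw [isOpenParsing_iff hW hc hct]
    change ((_ ∧ List.IsChain _ _) ∧ _) ↔ _
    simp only [ IsParsingAfter, List.forall_mem_cons]
    fin_cases i <;>
      simp [q, pad, wordOf, tightWords] <;> grind
  have hnil : ¬ IsOpenParsing W [] := by
    rintro ⟨-, h, -⟩
    rw [hW] at h
    exact hc h.symm
  rw [hopen, sumLists_succ, Finset.sum_congr rfl fun i _ =>
    sumLists_firstWord (W.length + 2) i (pad i ++ c) _ (q i) (hfirst i)]
  have key := fun i => firstWordVal_eq (W.length + 2) (valAfter_eq _) (wordOf i) (pad i ++ c)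
    (by fin_cases i <;> simp [wordOf]) (by fin_cases i <;> simp [pad] <;> omega)
  have hX := hct.1
  simp only [key, List.map_nil, if_neg hnil]
  simp [Fin.sum_univ_succ, wordOf, q, pad, tightCoeff, wordWt, transferVal]
  clear key hfirst hopen hnil hlen hct hW
  rcases c with _ | ⟨_ | _ | _, _ | ⟨_ | _ | _, _ | ⟨_ | _ | _, s⟩⟩⟩ <;>
    simp at hc hX <;> simp [transfer] <;> ring

/-! ### The reversal-invariant bilinear form -/

/-- A symmetric bilinear form for which the transfer operator of each letter is
self-adjoint. -/
noncomputable def transferForm (s u : PWord) : Polynomial ℤ :=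
  let t : Polynomial ℤ := Polynomial.X
  let (g, a, h) := transfer s
  let (g', a', h') := transfer u
  g * g' - t * (g * a' + a * g') + t * (g * h' + h * g') + t * a * a'
    - t * (a * h' + h * a') + t ^ 2 * h * h'

theorem transferForm_comm (s u : PWord) : transferForm s u = transferForm u s := by
  simp only [transferForm]; ring

theorem transferForm_cons (x : PLetter) (s u : PWord) :
    transferForm (x :: s) u = transferForm s (x :: u) := by
  cases x <;> simp only [transferForm, transfer] <;> ring

theorem transferForm_append (r s u : PWord) :
    transferForm (r.reverse ++ s) u = transferForm s (r ++ u) := by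
  induction r generalizing s with
  | nil => rfl
  | cons x r ih => simp [ih, transferForm_cons]

theorem transferForm_nil (u : PWord) :
    transferForm [] u = (transfer u).1 - Polynomial.X * (transfer u).2.1 +
      Polynomial.X * (transfer u).2.2 := by
  simp only [transferForm, transfer]; ring

/-- **Open theorem.**  For every finite string `W` over `{A, X, B}`, the open values in
the tight puzzle satisfy `|W| = |W̄|`, where `W̄` is the reversed string. -/
theorem open_reversal (W : PWord) : openVal W = openVal W.reverse := by
  rcases exists_eq_pad W with ⟨m, rfl⟩ | ⟨m, n, c, hne, hct, rfl⟩
  · simp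
  · have hrev : (List.replicate m PLetter.X ++ c ++ List.replicate n PLetter.X).reverse =
        List.replicate n PLetter.X ++ c.reverse ++ List.replicate m PLetter.X := by simp
    have hct' : IsTrimmed c.reverse := ⟨by simpa using hct.2, by simpa using hct.1⟩
    have hne' : c.reverse ≠ [] := by simpa using hne
    rw [hrev, openVal_eq (core_pad m n c hne hct) hne hct (by simp; omega),
      openVal_eq (core_pad n m _ hne' hct') hne' hct' (by simp; omega),
      ← transferForm_nil, ← transferForm_nil, transferForm_comm [] c.reverse]
    simpa using (transferForm_append c [] []).symm
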